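/- Let L ≥ 1 and let G_ℓ ∈ ℝ^{3×3}, ℓ = 1,…,L, be symmetric positive definite matrices; set γ_ℓ(p) = (p·G_ℓ p)^{1/2} and γ(p) = Σ_{ℓ=1}^L γ_ℓ(p), and define the matrix-valued map B by B(q) = γ(q) Σ_{ℓ=1}^L γ_ℓ(q)^{-1} G_ℓ for q ≠ 0 and B(0) = L Σ_{ℓ=1}^L G_ℓ. Then for all p, q ∈ ℝ³ one has (B(q)p) · (p − q) ≥ γ(p)·(γ(p) − γ(q)). -/

import Mathlib

/-!
Write `a_ℓ = γ_ℓ(p)` and `b_ℓ = γ_ℓ(q)`. The Cauchy–Schwarz inequality for the inner product given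
by `G_ℓ` (`dotProduct_mulVec_le_gammaEll`) yields `(G_ℓ p) ⋅ (p - q) ≥ a_ℓ² - a_ℓ b_ℓ`. For `q ≠ 0`,
dividing by `b_ℓ > 0`, summing and multiplying by `γ(q) = ∑ b_ℓ` bounds the left-hand side below by
`γ(q) ∑ a_ℓ² / b_ℓ - γ(q) γ(p)`, and `(∑ a_ℓ)² ≤ (∑ b_ℓ) (∑ a_ℓ² / b_ℓ)` (Sedrakyan's form of
Cauchy–Schwarz) finishes. For `q = 0` the claim reduces to `(∑ a_ℓ)² ≤ L ∑ a_ℓ²`.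
-/

open Matrix BigOperators

/-- The single-summand density `γ_ℓ(p) = (p ⋅ G_ℓ p)^{1/2}` of a BGN anisotropy. -/
noncomputable def gammaEll {L : ℕ} (G : Fin L → Matrix (Fin 3) (Fin 3) ℝ)
    (ℓ : Fin L) (p : Fin 3 → ℝ) : ℝ :=
  Real.sqrt (p ⬝ᵥ (G ℓ).mulVec p)

/-- The BGN anisotropy `γ(p) = ∑_ℓ (p ⋅ G_ℓ p)^{1/2}`. -/
noncomputable def gammaBGN {L : ℕ} (G : Fin L → Matrix (Fin 3) (Fin 3) ℝ)
    (p : Fin 3 → ℝ) : ℝ :=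
  ∑ ℓ, gammaEll G ℓ p

/-- The linearized BGN operator `B(q) = γ(q) ∑_ℓ γ_ℓ(q)⁻¹ G_ℓ` for `q ≠ 0`,
with `B(0) = L ∑_ℓ G_ℓ`. -/
noncomputable def Bmat {L : ℕ} (G : Fin L → Matrix (Fin 3) (Fin 3) ℝ)
    (q : Fin 3 → ℝ) : Matrix (Fin 3) (Fin 3) ℝ :=
  if q = 0 then (L : ℝ) • ∑ ℓ, G ℓ
  else gammaBGN G q • ∑ ℓ, (gammaEll G ℓ q)⁻¹ • G ℓ

section

variable {L : ℕ} {G : Fin L → Matrix (Fin 3) (Fin 3) ℝ}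

lemma gammaEll_nonneg (ℓ : Fin L) (p : Fin 3 → ℝ) : 0 ≤ gammaEll G ℓ p :=
  Real.sqrt_nonneg _

lemma gammaEll_sq (hG : ∀ ℓ, (G ℓ).PosDef) (ℓ : Fin L) (p : Fin 3 → ℝ) :
    gammaEll G ℓ p ^ 2 = p ⬝ᵥ (G ℓ).mulVec p :=
  Real.sq_sqrt (by simpa using (hG ℓ).posSemidef.dotProduct_mulVec_nonneg p)

lemma gammaEll_pos (hG : ∀ ℓ, (G ℓ).PosDef) (ℓ : Fin L) {p : Fin 3 → ℝ} (hp : p ≠ 0) :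
    0 < gammaEll G ℓ p :=
  Real.sqrt_pos.2 (by simpa using (hG ℓ).dotProduct_mulVec_pos hp)

lemma mulVec_dotProduct_comm (hG : ∀ ℓ, (G ℓ).PosDef) (ℓ : Fin L) (p q : Fin 3 → ℝ) :
    (G ℓ).mulVec p ⬝ᵥ q = p ⬝ᵥ (G ℓ).mulVec q := by
  have h : (G ℓ)ᵀ = G ℓ := by simpa using (hG ℓ).isHermitian.eq
  rw [dotProduct_mulVec, ← mulVec_transpose, h]

/-- The Cauchy–Schwarz inequality for the inner product given by `G ℓ`. -/
lemma dotProduct_mulVec_le_gammaEll (hG : ∀ ℓ, (G ℓ).PosDef) (ℓ : Fin L) (p q : Fin 3 → ℝ) :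
    p ⬝ᵥ (G ℓ).mulVec q ≤ gammaEll G ℓ p * gammaEll G ℓ q := by
  rcases eq_or_ne p 0 with rfl | hp
  · simp [gammaEll]
  rcases eq_or_ne q 0 with rfl | hq
  · simp [gammaEll]
  have ha := gammaEll_pos hG ℓ hp
  have hb := gammaEll_pos hG ℓ hq
  have hpp := gammaEll_sq hG ℓ p
  have hqq := gammaEll_sq hG ℓ q
  have hqp : q ⬝ᵥ (G ℓ).mulVec p = p ⬝ᵥ (G ℓ).mulVec q := by
    rw [dotProduct_comm, mulVec_dotProduct_comm hG]
  set a := gammaEll G ℓ p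
  set b := gammaEll G ℓ q
  -- Positivity of the form at `b p - a q` reads `0 ≤ 2 a b (a b - p ⋅ G q)`.
  have h : 0 ≤ (b • p - a • q) ⬝ᵥ (G ℓ).mulVec (b • p - a • q) := by
    simpa using (hG ℓ).posSemidef.dotProduct_mulVec_nonneg (b • p - a • q)
  simp only [mulVec_sub, mulVec_smul, dotProduct_sub, sub_dotProduct, dotProduct_smul,
    smul_dotProduct, smul_eq_mul, hqp, ← hpp, ← hqq] at h
  have h2 : 0 ≤ (2 * (a * b)) * (a * b - p ⬝ᵥ (G ℓ).mulVec q) := by linarith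
  linarith [nonneg_of_mul_nonneg_right h2 (by positivity)]

end

/-- **Lemma 3.3** (monotonicity of the linearized anisotropic operator): for the BGN
anisotropy `γ(p) = ∑_ℓ (p ⋅ G_ℓ p)^{1/2}` with `G_ℓ` symmetric positive definite,
`(B(q)p) ⋅ (p − q) ≥ γ(p)(γ(p) − γ(q))` for all `p, q ∈ ℝ³`. -/
theorem Bmat_monotone (L : ℕ) (hL : 1 ≤ L)
    (G : Fin L → Matrix (Fin 3) (Fin 3) ℝ) (hG : ∀ ℓ, (G ℓ).PosDef)
    (p q : Fin 3 → ℝ) :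
    ((Bmat G q).mulVec p) ⬝ᵥ (p - q) ≥ gammaBGN G p * (gammaBGN G p - gammaBGN G q) := by
  rcases eq_or_ne q 0 with rfl | hq
  · have h0 : gammaBGN G 0 = 0 := by simp [gammaBGN, gammaEll]
    have h := sq_sum_le_card_mul_sum_sq (s := Finset.univ) (f := fun ℓ => gammaEll G ℓ p)
    simp only [Finset.card_univ, Fintype.card_fin] at h
    simp only [h0, Bmat, if_true, sub_zero, smul_mulVec, sum_mulVec, smul_dotProduct,
      sum_dotProduct, mulVec_dotProduct_comm hG, ← gammaEll_sq hG, smul_eq_mul]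
    rw [← sq]
    exact h
  · have hb : ∀ ℓ, 0 < gammaEll G ℓ q := fun ℓ => gammaEll_pos hG ℓ hq
    have hγ : 0 < gammaBGN G q :=
      Finset.sum_pos (fun ℓ _ => hb ℓ) ⟨⟨0, hL⟩, Finset.mem_univ _⟩
    have hS : gammaBGN G p ^ 2 / gammaBGN G q ≤ ∑ ℓ, gammaEll G ℓ p ^ 2 / gammaEll G ℓ q :=
      Finset.univ.sq_sum_div_le_sum_sq_div _ fun ℓ _ => hb ℓ
    rw [div_le_iff₀ hγ] at hS
    have hT : ∑ ℓ, gammaEll G ℓ p ^ 2 / gammaEll G ℓ q - gammaBGN G p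
        ≤ ∑ ℓ, (gammaEll G ℓ q)⁻¹ * ((G ℓ).mulVec p ⬝ᵥ (p - q)) := by
      rw [gammaBGN, ← Finset.sum_sub_distrib]
      refine Finset.sum_le_sum fun ℓ _ => ?_
      have hc := dotProduct_mulVec_le_gammaEll hG ℓ p q
      have hbℓ := hb ℓ
      rw [mulVec_dotProduct_comm hG, mulVec_sub, dotProduct_sub, ← gammaEll_sq hG,
        inv_mul_eq_div, le_div_iff₀ hbℓ, sub_mul, div_mul_cancel₀ _ hbℓ.ne']
      linarith
    simp only [Bmat, if_neg hq, smul_mulVec, sum_mulVec, smul_dotProduct, sum_dotProduct,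
      smul_eq_mul]
    have hM := mul_le_mul_of_nonneg_left hT hγ.le
    linarith
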